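/- Let f be C²-smooth on an open neighbourhood of S^{n-1} whose restriction to S^{n-1} is orthogonal to all affine functions. Then for every a ∈ ℝ, ∫ f² dσ_{n-1} ≤ (5/(n−1)²) ∫ ‖f'' − a I_n‖²_HS dσ_{n-1}, where f'' is the Euclidean Hessian and I_n the identity matrix. -/

import Mathlib

open MeasureTheory Metric Filter
open scoped RealInnerProductSpace ENNReal NNReal

noncomputable section

namespace SecondOrderConc

/-- Euclidean space ℝⁿ. -/
abbrev E (n : ℕ) : Type := EuclideanSpace ℝ (Fin n)

/-- The uniform (normalized rotation-invariant) probability measure `σ_{n-1}`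
on the unit sphere `S^{n-1}`, viewed as a measure on the ambient space ℝⁿ. -/
def sphMeasure (n : ℕ) : Measure (E n) :=
  ((((volume : Measure (E n)).toSphere).map Subtype.val) Set.univ)⁻¹ •
    (((volume : Measure (E n)).toSphere).map Subtype.val)

variable {n : ℕ}

/-- Euclidean Hessian of `f` at `x`, as a continuous linear operator on ℝⁿ. -/
def hess (f : E n → ℝ) (x : E n) : E n →L[ℝ] E n :=
  fderiv ℝ (gradient f) x

/-- Squared Hilbert–Schmidt norm of an operator on ℝⁿ. -/
def hsNormSq (A : E n →L[ℝ] E n) : ℝ :=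
  ∑ i : Fin n, ‖A (EuclideanSpace.single i 1)‖ ^ 2

/-- Orthogonal projection of ℝⁿ onto `θ^⊥` (for a unit vector `θ`). -/
def projPerp (θ : E n) : E n →L[ℝ] E n :=
  ContinuousLinearMap.id ℝ (E n) - (innerSL ℝ θ).smulRight θ

/-- Spherical gradient `∇_S f(θ) = ∇f(θ) − ⟨∇f(θ),θ⟩θ`. -/
def sgrad (f : E n → ℝ) (θ : E n) : E n :=
  gradient f θ - ⟪gradient f θ, θ⟫ • θ

/-- Spherical Hessian `f''_S(θ) = P_{θ^⊥} (f''(θ) − ⟨∇f(θ),θ⟩ I_n) P_{θ^⊥}`. -/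
def sHess (f : E n → ℝ) (θ : E n) : E n →L[ℝ] E n :=
  (projPerp θ).comp
    ((hess f θ - ⟪gradient f θ, θ⟫ • ContinuousLinearMap.id ℝ (E n)).comp (projPerp θ))

/-- Spherical Laplacian `Δ_S f(θ) = Tr f''_S(θ)`. -/
def sLap (f : E n → ℝ) (θ : E n) : ℝ :=
  LinearMap.trace ℝ (E n) (sHess f θ).toLinearMap

/-- Euclidean Laplacian `Δ f = Tr f''`. -/
def eLap (f : E n → ℝ) (x : E n) : ℝ :=
  LinearMap.trace ℝ (E n) (hess f x).toLinearMap

/-- 0-homogeneous extension to `ℝⁿ \ {0}` of (the restriction to the sphere of) `g`. -/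
def ext0 (g : E n → ℝ) : E n → ℝ := fun x => g (‖x‖⁻¹ • x)

/-!
*Gaussian Poincaré inequality.* If `x`, `y` are independent standard Gaussian vectors, then
`(cos t) x + (sin t) y` and its `t`-derivative are again independent standard Gaussian for
every `t`. Writing `F y - F x` as the integral of the derivative of `F` along this quarter turn,
Cauchy–Schwarz gives `Var F ≤ (π² / 8) 𝔼 ‖F'‖²`. The turn avoids the origin as soon as
`x` and `y` are linearly independent, so a singularity of `F` at `0` is harmless.

*Poincaré inequality on the sphere.* The `1`-homogeneous extension `F` of `g` has
`‖F'‖² = g² + |∇_S g|²` on each ray, while `𝔼 F² = n ∫ g²`. Since `π² / 8 ≤ 5 / 4`, a centred `g`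
satisfies `n ∫ g² ≤ (5 / 4) (∫ g² + ∫ |∇_S g|²)`, and absorbing `∫ g²` on the left leaves the
constant `11 / (5 (n - 1))` for all `n ≥ 2`.

*Second order.* Let `c` be the mean over the sphere of `∇f(x) - a x`. As `f` is orthogonal to linear
functions, passing from `f` to `f - ⟨c, ·⟩ - (a / 2) ‖·‖²` can only increase the variance on the
sphere, where the quadratic term is constant. The gradient of this new function is the centred
field `∇f - a x - c`, to whose coordinates the inequality applies again. The resulting constant
is `(11 / 5)² / (n - 1)²`, and `(11 / 5)² < 5`.
-/

open ProbabilityTheory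

/-! ### Cauchy–Schwarz and variance -/

section Variance

variable {Ω : Type*} [MeasurableSpace Ω] {μ : Measure Ω}

lemma lintegral_sq_le {f : Ω → ℝ≥0∞} (hf : AEMeasurable f μ) :
    (∫⁻ ω, f ω ∂μ) ^ 2 ≤ μ Set.univ * ∫⁻ ω, f ω ^ 2 ∂μ := by
  have holder := ENNReal.lintegral_mul_le_Lp_mul_Lq μ Real.HolderConjugate.two_two hf
    (aemeasurable_const (b := 1))
  simp only [Pi.mul_apply, mul_one, ENNReal.rpow_two, one_pow, lintegral_one, one_div] at holder
  calc (∫⁻ ω, f ω ∂μ) ^ 2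
      ≤ ((∫⁻ ω, f ω ^ 2 ∂μ) ^ (2⁻¹ : ℝ) * μ Set.univ ^ (2⁻¹ : ℝ)) ^ 2 := by gcongr
    _ = μ Set.univ * ∫⁻ ω, f ω ^ 2 ∂μ := by
        rw [mul_pow, ← ENNReal.rpow_mul_natCast, ← ENNReal.rpow_mul_natCast]
        norm_num [mul_comm]

variable [IsProbabilityMeasure μ] {X Y : Ω → ℝ}

lemma lintegral_prod_enorm_sub_sq (hX : MemLp X 2 μ) :
    ∫⁻ p, ‖X p.2 - X p.1‖ₑ ^ 2 ∂μ.prod μ = ENNReal.ofReal (2 * Var[X; μ]) := by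
  have hmean : ∫ p, (X p.2 - X p.1) ∂μ.prod μ = 0 := by
    have hXi := hX.integrable one_le_two
    rw [integral_sub (hXi.comp_snd μ) (hXi.comp_fst μ), integral_fun_fst, integral_fun_snd,
      sub_self]
  have hmem : MemLp (fun p : Ω × Ω ↦ X p.2 - X p.1) 2 (μ.prod μ) :=
    (hX.comp_snd μ).sub (hX.comp_fst μ)
  have hvar : Var[fun p : Ω × Ω ↦ X p.2 - X p.1; μ.prod μ] = 2 * Var[X; μ] := by
    simp_rw [← neg_add_eq_sub]
    rw [variance_add_prod (X := fun ω ↦ -X ω) hX.neg hX, variance_fun_neg, two_mul]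
  rw [← hvar, ofReal_variance hmem, evariance, hmean]
  simp only [sub_zero]

lemma variance_le_variance_sub_of_covariance_eq_zero (hX : MemLp X 2 μ) (hY : MemLp Y 2 μ)
    (hXY : cov[X, Y; μ] = 0) : Var[X; μ] ≤ Var[fun ω ↦ X ω - Y ω; μ] := by
  rw [variance_fun_sub hX hY, hXY]
  linarith [variance_nonneg Y μ]

lemma integral_norm_sub_integral_sq {ι : Type*} [Fintype ι] {X : Ω → EuclideanSpace ℝ ι}
    (hX : MemLp X 2 μ) :
    ∫ ω, ‖X ω - ∫ ω', X ω' ∂μ‖ ^ 2 ∂μ = ∑ i, Var[fun ω ↦ X ω i; μ] := by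
  have hcoord (i : ι) : MemLp (fun ω ↦ X ω i) 2 μ :=
    (EuclideanSpace.proj (𝕜 := ℝ) i).comp_memLp' hX
  have hmean (i : ι) : (∫ ω, X ω ∂μ) i = ∫ ω, X ω i ∂μ :=
    ((EuclideanSpace.proj (𝕜 := ℝ) i).integral_comp_comm (hX.integrable one_le_two)).symm
  have hint (i : ι) : Integrable (fun ω ↦ (X ω i - ∫ ω', X ω' i ∂μ) ^ 2) μ :=
    ((hcoord i).sub (memLp_const _)).integrable_sq
  simp only [EuclideanSpace.real_norm_sq_eq, PiLp.sub_apply, hmean]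
  rw [integral_finsetSum _ fun i _ ↦ hint i]
  exact Finset.sum_congr rfl fun i _ ↦ (variance_eq_integral (hcoord i).aemeasurable).symm

end Variance

/-! ### The standard Gaussian measure -/

section StdGaussian

variable {V : Type*} [NormedAddCommGroup V] [InnerProductSpace ℝ V]

/-- Density of the standard Gaussian measure of `V` with respect to Lebesgue measure. -/
def stdGaussianPDFReal (x : V) : ℝ :=
  (2 * Real.pi) ^ (-(Module.finrank ℝ V : ℝ) / 2) * Real.exp (-‖x‖ ^ 2 / 2)

lemma stdGaussianPDFReal_nonneg (x : V) : 0 ≤ stdGaussianPDFReal x := by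
  unfold stdGaussianPDFReal; positivity

lemma stdGaussianPDFReal_mul_cexp_inner (t x : V) :
    stdGaussianPDFReal x * Complex.exp (⟪x, t⟫ * Complex.I) =
      ((2 * Real.pi : ℝ) ^ (-(Module.finrank ℝ V : ℝ) / 2) : ℝ) *
        Complex.exp (-(1 / 2 : ℂ) * ‖x‖ ^ 2 + Complex.I * ⟪t, x⟫) := by
  rw [stdGaussianPDFReal, real_inner_comm, Complex.exp_add]
  push_cast
  rw [mul_assoc]
  congr 3 <;> ring_nf

variable [MeasurableSpace V] [BorelSpace V]

@[fun_prop]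
lemma measurable_stdGaussianPDFReal : Measurable (stdGaussianPDFReal (V := V)) := by
  unfold stdGaussianPDFReal; fun_prop

variable [FiniteDimensional ℝ V]

lemma integral_stdGaussianPDFReal_mul_cexp_inner (t : V) :
    ∫ x : V, stdGaussianPDFReal x * Complex.exp (⟪x, t⟫ * Complex.I) =
      Complex.exp (-‖t‖ ^ 2 / 2) := by
  have hconst : ((Real.pi : ℂ) / (1 / 2)) ^ ((Module.finrank ℝ V : ℂ) / 2) =
      ((2 * Real.pi : ℝ) ^ ((Module.finrank ℝ V : ℝ) / 2) : ℝ) := by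
    rw [Complex.ofReal_cpow (by positivity)]
    simp [mul_comm]
  simp_rw [stdGaussianPDFReal_mul_cexp_inner]
  rw [integral_const_mul,
    GaussianFourier.integral_cexp_neg_mul_sq_norm_add (by norm_num), hconst, ← mul_assoc,
    ← Complex.ofReal_mul, ← Real.rpow_add (by positivity), neg_div, neg_add_cancel, Real.rpow_zero,
    Complex.ofReal_one, one_mul, Complex.I_sq]
  ring_nf

lemma integrable_stdGaussianPDFReal : Integrable (stdGaussianPDFReal (V := V)) := by
  have hint : Integrable fun x : V ↦
      (stdGaussianPDFReal x : ℂ) * Complex.exp (⟪x, (0 : V)⟫ * Complex.I) := by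
    simp_rw [stdGaussianPDFReal_mul_cexp_inner]
    exact (GaussianFourier.integrable_cexp_neg_mul_sq_norm_add (by norm_num) _ _).const_mul _
  simpa using hint.re

lemma stdGaussian_eq_withDensity :
    stdGaussian V =
      (volume : Measure V).withDensity fun x ↦ ENNReal.ofReal (stdGaussianPDFReal x) := by
  have : IsFiniteMeasure
      ((volume : Measure V).withDensity fun x ↦ ENNReal.ofReal (stdGaussianPDFReal x)) :=
    isFiniteMeasure_withDensity_ofReal integrable_stdGaussianPDFReal.2
  refine Measure.ext_of_charFun (funext fun t ↦ ?_)
  rw [charFun_stdGaussian, charFun_apply,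
    integral_withDensity_eq_integral_toReal_smul (by fun_prop) (by simp),
    ← integral_stdGaussianPDFReal_mul_cexp_inner]
  simp_rw [ENNReal.toReal_ofReal (stdGaussianPDFReal_nonneg _), Complex.real_smul]

lemma stdGaussian_absolutelyContinuous : stdGaussian V ≪ (volume : Measure V) := by
  rw [stdGaussian_eq_withDensity]
  exact withDensity_absolutelyContinuous _ _

lemma integral_stdGaussian {F : Type*} [NormedAddCommGroup F] [NormedSpace ℝ F] (u : V → F) :
    ∫ x, u x ∂stdGaussian V = ∫ x, stdGaussianPDFReal x • u x := by
  rw [stdGaussian_eq_withDensity,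
    integral_withDensity_eq_integral_toReal_smul (by fun_prop) (by simp)]
  simp_rw [ENNReal.toReal_ofReal (stdGaussianPDFReal_nonneg _)]

lemma memLp_strongDual_stdGaussian (L : StrongDual ℝ V) : MemLp L 2 (stdGaussian V) :=
  L.comp_memLp' IsGaussian.memLp_two_id

lemma integral_strongDual_sq_stdGaussian (L : StrongDual ℝ V) :
    ∫ x, L x ^ 2 ∂stdGaussian V = ‖L‖ ^ 2 := by
  rw [← variance_dual_stdGaussian, variance_of_integral_eq_zero (by fun_prop) (by simp)]

lemma lintegral_enorm_strongDual_sq_stdGaussian (L : StrongDual ℝ V) :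
    ∫⁻ x, ‖L x‖ₑ ^ 2 ∂stdGaussian V = ‖L‖ₑ ^ 2 := by
  have hvar := ofReal_variance (memLp_strongDual_stdGaussian L)
  rw [variance_dual_stdGaussian, ENNReal.ofReal_pow (norm_nonneg _), ofReal_norm] at hvar
  simp [hvar, evariance]

lemma integral_norm_sq_stdGaussian :
    ∫ x, ‖x‖ ^ 2 ∂stdGaussian V = Module.finrank ℝ V := by
  let b := stdOrthonormalBasis ℝ V
  simp_rw [← b.sum_sq_norm_inner_right, Real.norm_eq_abs, sq_abs]
  have hint (i) : Integrable (fun x ↦ ⟪b i, x⟫ ^ 2) (stdGaussian V) :=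
    (memLp_strongDual_stdGaussian (innerSL ℝ (b i))).integrable_sq
  have hunit (i) : ∫ x, ⟪b i, x⟫ ^ 2 ∂stdGaussian V = 1 := by
    simpa using integral_strongDual_sq_stdGaussian (innerSL ℝ (b i))
  rw [integral_finsetSum _ fun i _ ↦ hint i]
  simp [hunit]

end StdGaussian

/-! ### The Gaussian Poincaré inequality -/

section GaussianPoincare

variable {V : Type*} [NormedAddCommGroup V]

section Arc

variable [NormedSpace ℝ V] {F : V → ℝ} {p : V × V}

lemma rotation_fst_ne_zero (hp : LinearIndependent ℝ ![p.1, p.2]) (t : ℝ) :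
    (ContinuousLinearMap.rotation t p).1 ≠ 0 := by
  intro h
  rw [ContinuousLinearMap.rotation_apply] at h
  obtain ⟨hcos, hsin⟩ := LinearIndependent.pair_iff.1 hp _ _ h
  simpa [hcos, hsin] using Real.sin_sq_add_cos_sq t

lemma hasDerivAt_rotation_fst (p : V × V) (t : ℝ) :
    HasDerivAt (fun t ↦ (ContinuousLinearMap.rotation t p).1)
      (ContinuousLinearMap.rotation t p).2 t := by
  simp only [ContinuousLinearMap.rotation_apply]
  exact ((Real.hasDerivAt_cos t).smul_const p.1).add ((Real.hasDerivAt_sin t).smul_const p.2)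

lemma enorm_sub_sq_le_lintegral_rotation (hF : ∀ x ≠ 0, ContDiffAt ℝ 1 F x)
    (hp : LinearIndependent ℝ ![p.1, p.2]) :
    ‖F p.2 - F p.1‖ₑ ^ 2 ≤ ENNReal.ofReal (Real.pi / 2) *
      ∫⁻ t in Set.Ioc 0 (Real.pi / 2), ‖fderiv ℝ F (ContinuousLinearMap.rotation t p).1
        (ContinuousLinearMap.rotation t p).2‖ₑ ^ 2 := by
  set u : ℝ → ℝ := fun t ↦ fderiv ℝ F (ContinuousLinearMap.rotation t p).1
    (ContinuousLinearMap.rotation t p).2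
  have hderiv (t : ℝ) : HasDerivAt (fun t ↦ F (ContinuousLinearMap.rotation t p).1) (u t) t :=
    ((hF _ (rotation_fst_ne_zero hp t)).differentiableAt
      one_ne_zero).hasFDerivAt.comp_hasDerivAt t (hasDerivAt_rotation_fst p t)
  have hu : Continuous u := by
    have hfderiv : ContinuousOn (fderiv ℝ F) {0}ᶜ := fun x hx ↦
      ((hF x hx).fderiv_right (m := 0) le_rfl).continuousAt.continuousWithinAt
    simp only [u, ContinuousLinearMap.rotation_apply]
    refine (hfderiv.comp_continuous (by fun_prop) fun t ↦ ?_).clm_apply (by fun_prop)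
    simpa [ContinuousLinearMap.rotation_apply] using rotation_fst_ne_zero hp t
  have hftc : ∫ t in Set.Ioc 0 (Real.pi / 2), u t = F p.2 - F p.1 := by
    rw [← intervalIntegral.integral_of_le Real.pi_div_two_pos.le,
      intervalIntegral.integral_eq_sub_of_hasDerivAt (fun t _ ↦ hderiv t)
        (hu.intervalIntegrable _ _)]
    simp [ContinuousLinearMap.rotation_apply]
  calc ‖F p.2 - F p.1‖ₑ ^ 2
      ≤ (∫⁻ t in Set.Ioc 0 (Real.pi / 2), ‖u t‖ₑ) ^ 2 := by
        rw [← hftc]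
        gcongr
        exact enorm_integral_le_lintegral_enorm _
    _ ≤ volume.restrict (Set.Ioc 0 (Real.pi / 2)) Set.univ *
          ∫⁻ t in Set.Ioc 0 (Real.pi / 2), ‖u t‖ₑ ^ 2 :=
        lintegral_sq_le hu.enorm.aemeasurable
    _ = _ := by simp [u]

end Arc

variable [MeasurableSpace V] [BorelSpace V]

lemma ae_linearIndependent_pair [NormedSpace ℝ V] [FiniteDimensional ℝ V] {μ ν : Measure V}
    [SFinite μ] [SFinite ν] (hV : 2 ≤ Module.finrank ℝ V) (hμ : μ ≪ Measure.addHaar)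
    (hν : ν ≪ Measure.addHaar) :
    ∀ᵐ p ∂μ.prod ν, LinearIndependent ℝ ![p.1, p.2] := by
  have hopen : IsOpen {p : V × V | LinearIndependent ℝ ![p.1, p.2]} :=
    isOpen_setOfPred_linearIndependent.preimage (by fun_prop)
  have : Nontrivial V := Module.nontrivial_of_finrank_pos (R := ℝ) (by lia)
  rw [Measure.ae_prod_iff_ae_ae hopen.measurableSet]
  filter_upwards [hμ.ae_le (Measure.ae_ne _ 0)] with x hx
  have hspan : ℝ ∙ x ≠ ⊤ := fun htop ↦ by
    have := finrank_span_singleton (K := ℝ) hx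
    rw [htop, finrank_top] at this
    lia
  filter_upwards [measure_eq_zero_iff_ae_notMem.1
    (hν (Measure.addHaar_submodule Measure.addHaar _ hspan))] with y hy
  exact (LinearIndependent.pair_iff' hx).2 fun a ha ↦ hy (Submodule.mem_span_singleton.2 ⟨a, ha⟩)

variable [InnerProductSpace ℝ V] [FiniteDimensional ℝ V] {F : V → ℝ}

@[fun_prop]
lemma measurable_fderiv_apply (F : V → ℝ) : Measurable fun p : V × V ↦ fderiv ℝ F p.1 p.2 := by
  have := FiniteDimensional.proper_real (V →L[ℝ] ℝ)
  exact (isBoundedBilinearMap_apply (𝕜 := ℝ) (E := V) (F := ℝ)).continuous.measurable.comp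
    (((measurable_fderiv ℝ F).comp measurable_fst).prodMk measurable_snd)

lemma lintegral_enorm_fderiv_rotation (F : V → ℝ) (t : ℝ) :
    ∫⁻ p, ‖fderiv ℝ F (ContinuousLinearMap.rotation t p).1
      (ContinuousLinearMap.rotation t p).2‖ₑ ^ 2 ∂(stdGaussian V).prod (stdGaussian V) =
    ∫⁻ x, ‖fderiv ℝ F x‖ₑ ^ 2 ∂stdGaussian V := by
  have hmeas : Measurable fun p : V × V ↦ ‖fderiv ℝ F p.1 p.2‖ₑ ^ 2 := by fun_prop
  rw [← lintegral_map (g := ContinuousLinearMap.rotation t) hmeas (by fun_prop),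
    IsGaussian.map_rotation_eq_self integral_id_stdGaussian, lintegral_prod _ hmeas.aemeasurable]
  simp_rw [lintegral_enorm_strongDual_sq_stdGaussian]

lemma lintegral_enorm_sub_sq_le (hV : 2 ≤ Module.finrank ℝ V)
    (hF : ∀ x ≠ 0, ContDiffAt ℝ 1 F x) :
    ∫⁻ p, ‖F p.2 - F p.1‖ₑ ^ 2 ∂(stdGaussian V).prod (stdGaussian V) ≤
      ENNReal.ofReal (Real.pi / 2) ^ 2 * ∫⁻ x, ‖fderiv ℝ F x‖ₑ ^ 2 ∂stdGaussian V := by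
  set γ := stdGaussian V
  have hγ : γ ≪ Measure.addHaar :=
    stdGaussian_absolutelyContinuous.trans (Measure.absolutelyContinuous_isAddHaarMeasure _ _)
  have hmeas : Measurable fun q : (V × V) × ℝ ↦
      ‖fderiv ℝ F (ContinuousLinearMap.rotation q.2 q.1).1
        (ContinuousLinearMap.rotation q.2 q.1).2‖ₑ ^ 2 := by
    have hrot : Measurable fun q : (V × V) × ℝ ↦ ContinuousLinearMap.rotation q.2 q.1 := by
      simp only [ContinuousLinearMap.rotation_apply]
      fun_prop
    exact ((measurable_fderiv_apply F).comp hrot).enorm.pow_const 2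
  calc ∫⁻ p, ‖F p.2 - F p.1‖ₑ ^ 2 ∂γ.prod γ
      ≤ ∫⁻ p, ENNReal.ofReal (Real.pi / 2) *
          (∫⁻ t in Set.Ioc 0 (Real.pi / 2), ‖fderiv ℝ F (ContinuousLinearMap.rotation t p).1
            (ContinuousLinearMap.rotation t p).2‖ₑ ^ 2) ∂γ.prod γ := by
        refine lintegral_mono_ae ?_
        filter_upwards [ae_linearIndependent_pair hV hγ hγ] with p hp
        exact enorm_sub_sq_le_lintegral_rotation hF hp
    _ = ENNReal.ofReal (Real.pi / 2) ^ 2 * ∫⁻ x, ‖fderiv ℝ F x‖ₑ ^ 2 ∂γ := by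
        rw [lintegral_const_mul' _ _ ENNReal.ofReal_ne_top,
          lintegral_lintegral_swap hmeas.aemeasurable]
        simp_rw [γ, lintegral_enorm_fderiv_rotation]
        simp [sq, mul_assoc, mul_comm]

lemma variance_stdGaussian_le (hV : 2 ≤ Module.finrank ℝ V)
    (hF : ∀ x ≠ 0, ContDiffAt ℝ 1 F x) (hF2 : MemLp F 2 (stdGaussian V))
    (hF' : MemLp (fderiv ℝ F) 2 (stdGaussian V)) :
    Var[F; stdGaussian V] ≤ Real.pi ^ 2 / 8 * ∫ x, ‖fderiv ℝ F x‖ ^ 2 ∂stdGaussian V := by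
  have henergy : ∫⁻ x, ‖fderiv ℝ F x‖ₑ ^ 2 ∂stdGaussian V =
      ENNReal.ofReal (∫ x, ‖fderiv ℝ F x‖ ^ 2 ∂stdGaussian V) := by
    rw [ofReal_integral_eq_lintegral_ofReal (hF'.integrable_norm_pow two_ne_zero)
      (.of_forall fun _ ↦ by positivity)]
    simp only [ENNReal.ofReal_pow (norm_nonneg _), ofReal_norm]
  have hpairs := lintegral_enorm_sub_sq_le hV hF
  rw [lintegral_prod_enorm_sub_sq hF2, henergy, ← ENNReal.ofReal_pow (by positivity),
    ← ENNReal.ofReal_mul (by positivity),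
    ENNReal.ofReal_le_ofReal_iff (by positivity)] at hpairs
  linarith

end GaussianPoincare

/-! ### Polar coordinates -/

section Polar

variable {V : Type*} [NormedAddCommGroup V] [InnerProductSpace ℝ V] [FiniteDimensional ℝ V]
  [MeasurableSpace V] [BorelSpace V]

lemma integral_norm_mul_direction [Nontrivial V] (μ : Measure V) [μ.IsAddHaarMeasure]
    (h : ℝ → ℝ) (g : V → ℝ) :
    ∫ x, h ‖x‖ * g (‖x‖⁻¹ • x) ∂μ =
      (∫ x, h ‖x‖ ∂μ) * ⨍ θ : sphere (0 : V) 1, g θ ∂μ.toSphere := by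
  have polar (g : V → ℝ) : ∫ x, h ‖x‖ * g (‖x‖⁻¹ • x) ∂μ =
      (∫ θ : sphere (0 : V) 1, g θ ∂μ.toSphere) *
        ∫ r : Set.Ioi (0 : ℝ), h r ∂.volumeIoiPow (Module.finrank ℝ V - 1) := by
    calc ∫ x, h ‖x‖ * g (‖x‖⁻¹ • x) ∂μ
        = ∫ x : ({0}ᶜ : Set V), h ‖x.1‖ * g (‖x.1‖⁻¹ • x.1) ∂μ.comap (↑) := by
          rw [integral_subtype_comap (measurableSet_singleton _).compl
            fun x : V ↦ h ‖x‖ * g (‖x‖⁻¹ • x), restrict_compl_singleton]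
      _ = ∫ p, g p.1 * h p.2 ∂μ.toSphere.prod (.volumeIoiPow (Module.finrank ℝ V - 1)) := by
          rw [← μ.measurePreserving_homeomorphUnitSphereProd.integral_comp
            (Homeomorph.measurableEmbedding _)]
          simp [mul_comm]
      _ = _ := integral_prod_mul (fun θ : sphere (0 : V) 1 ↦ g θ)
            (fun r : Set.Ioi (0 : ℝ) ↦ h r)
  have hsphere : μ.toSphere.real Set.univ ≠ 0 := by
    rw [measureReal_ne_zero_iff, Ne, Measure.measure_univ_eq_zero]
    exact Measure.toSphere_ne_zero μ
  have radial := polar 1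
  simp only [Pi.one_apply, mul_one, integral_const, smul_eq_mul] at radial
  rw [polar g, radial, average_eq, smul_eq_mul]
  field_simp

lemma integral_norm_mul_direction_stdGaussian [Nontrivial V] (h : ℝ → ℝ) (g : V → ℝ) :
    ∫ x, h ‖x‖ * g (‖x‖⁻¹ • x) ∂stdGaussian V =
      (∫ x, h ‖x‖ ∂stdGaussian V) *
        ⨍ θ : sphere (0 : V) 1, g θ ∂(volume : Measure V).toSphere := by
  have haar := integral_norm_mul_direction (volume : Measure V)
    (fun r ↦ (2 * Real.pi) ^ (-(Module.finrank ℝ V : ℝ) / 2) * Real.exp (-r ^ 2 / 2) * h r) g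
  simpa only [integral_stdGaussian, stdGaussianPDFReal, smul_eq_mul, mul_assoc] using haar

end Polar

/-! ### The uniform measure on the sphere -/

section SphMeasure

lemma measurableEmbedding_coe_sphere :
    MeasurableEmbedding (Subtype.val : sphere (0 : E n) 1 → E n) :=
  .subtype_coe isClosed_sphere.measurableSet

lemma integral_sphMeasure (g : E n → ℝ) :
    ∫ θ, g θ ∂sphMeasure n =
      ⨍ θ : sphere (0 : E n) 1, g θ ∂(volume : Measure (E n)).toSphere := by
  rw [sphMeasure, integral_smul_measure, measurableEmbedding_coe_sphere.integral_map,
    measurableEmbedding_coe_sphere.map_apply, Set.preimage_univ, ENNReal.toReal_inv, average_eq,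
    Measure.real]

lemma ae_mem_sphere_sphMeasure : ∀ᵐ θ ∂sphMeasure n, θ ∈ sphere (0 : E n) 1 :=
  Measure.ae_smul_measure
    (measurableEmbedding_coe_sphere.ae_map_iff.2 (.of_forall fun θ ↦ θ.2)) _

variable [NeZero n]

instance : IsProbabilityMeasure (sphMeasure n) := by
  have : IsFiniteMeasure (((volume : Measure (E n)).toSphere).map Subtype.val) :=
    Measure.isFiniteMeasure_map _ _
  have : NeZero (((volume : Measure (E n)).toSphere).map Subtype.val) :=
    ⟨by simp [Measure.map_eq_zero_iff measurableEmbedding_coe_sphere.measurable.aemeasurable]⟩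
  exact isProbabilityMeasureSMul

lemma memLp_sphMeasure {F : Type*} [NormedAddCommGroup F] {g : E n → F} {p : ℝ≥0∞}
    (hg : ContinuousOn g (sphere 0 1)) : MemLp g p (sphMeasure n) := by
  obtain ⟨C, hC⟩ := (isCompact_sphere (0 : E n) 1).exists_bound_of_continuousOn hg
  refine MemLp.of_bound ?_ C (ae_mem_sphere_sphMeasure.mono hC)
  rw [← Measure.restrict_eq_self_of_ae_mem (ae_mem_sphere_sphMeasure (n := n))]
  exact hg.aestronglyMeasurable_of_isCompact (isCompact_sphere _ _)
    isClosed_sphere.measurableSet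

lemma integrable_sphMeasure {F : Type*} [NormedAddCommGroup F] {g : E n → F}
    (hg : ContinuousOn g (sphere 0 1)) : Integrable g (sphMeasure n) :=
  memLp_one_iff_integrable.1 (memLp_sphMeasure hg)

lemma integral_norm_mul_ext0 (h : ℝ → ℝ) (g : E n → ℝ) :
    ∫ x, h ‖x‖ * ext0 g x ∂stdGaussian (E n) =
      (∫ x, h ‖x‖ ∂stdGaussian (E n)) * ∫ θ, g θ ∂sphMeasure n := by
  rw [integral_sphMeasure]
  exact integral_norm_mul_direction_stdGaussian h g

end SphMeasure

/-! ### Gradients -/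

section Gradient

variable {V : Type*} [NormedAddCommGroup V] [InnerProductSpace ℝ V] {f : V → ℝ} {x : V}

lemma inv_norm_smul_mem_sphere (hx : x ≠ 0) : ‖x‖⁻¹ • x ∈ sphere (0 : V) 1 := by
  simp [norm_smul, hx]

variable [CompleteSpace V]

lemma hasGradientAt_norm (hx : x ≠ 0) : HasGradientAt (fun y : V ↦ ‖y‖) (‖x‖⁻¹ • x) x := by
  have hsqrt := (hasStrictFDerivAt_norm_sq x).hasFDerivAt.sqrt (by positivity)
  simp only [Real.sqrt_sq (norm_nonneg _)] at hsqrt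
  refine hasGradientAt_iff_hasFDerivAt.2 (hsqrt.congr_fderiv ?_)
  ext v
  simp only [one_div, mul_inv_rev, smul_apply, coe_innerSL_apply, nsmul_eq_mul,
    Nat.cast_ofNat, smul_eq_mul, map_smul, InnerProductSpace.toDual_apply_apply]
  field_simp

lemma hasGradientAt_sub_quadratic (hf : DifferentiableAt ℝ f x) (a : ℝ) (c : V) :
    HasGradientAt (fun y ↦ f y - ⟪c, y⟫ - a / 2 * ‖y‖ ^ 2) (gradient f x - a • x - c) x := by
  have hlinear : HasFDerivAt (fun y ↦ ⟪c, y⟫) (innerSL ℝ c) x := (innerSL ℝ c).hasFDerivAt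
  have hsq := (hasStrictFDerivAt_norm_sq x).hasFDerivAt.const_mul (a / 2)
  refine hasGradientAt_iff_hasFDerivAt.2
    (((hf.hasGradientAt.hasFDerivAt.sub hlinear).sub hsq).congr_fderiv ?_)
  ext1 v
  simp only [map_sub, map_smul, sub_apply, smul_apply, InnerProductSpace.toDual_apply_apply,
    coe_innerSL_apply, nsmul_eq_mul, Nat.cast_ofNat, smul_eq_mul]
  ring

lemma contDiffAt_gradient {m : WithTop ℕ∞} (hf : ContDiffAt ℝ (m + 1) f x) :
    ContDiffAt ℝ m (gradient f) x :=
  (InnerProductSpace.toDual ℝ V).symm.contDiff.contDiffAt.comp x (hf.fderiv_right le_rfl)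

end Gradient

/-! ### The Poincaré inequality on the sphere -/

section SpherePoincare

/-- The `1`-homogeneous extension to `ℝⁿ` of (the restriction to the sphere of) `g`. -/
def ext1 (g : E n → ℝ) : E n → ℝ := fun x ↦ ‖x‖ * ext0 g x

variable {g : E n → ℝ} {x θ : E n}

lemma norm_sgrad_sq (hθ : θ ∈ sphere (0 : E n) 1) :
    ‖sgrad g θ‖ ^ 2 = ‖gradient g θ‖ ^ 2 - ⟪gradient g θ, θ⟫ ^ 2 := by
  rw [sgrad, norm_sub_sq_real, norm_smul, mem_sphere_zero_iff_norm.1 hθ, real_inner_smul_right,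
    Real.norm_eq_abs, mul_one, sq_abs]
  ring

lemma norm_smul_add_sgrad_sq (c : ℝ) (hθ : θ ∈ sphere (0 : E n) 1) :
    ‖c • θ + sgrad g θ‖ ^ 2 = c ^ 2 + ‖sgrad g θ‖ ^ 2 := by
  have horth : ⟪θ, sgrad g θ⟫ = 0 := by
    rw [sgrad, inner_sub_right, real_inner_smul_right, real_inner_self_eq_norm_sq,
      mem_sphere_zero_iff_norm.1 hθ, real_inner_comm]
    ring
  rw [norm_add_sq_real, real_inner_smul_left, horth, norm_smul, mem_sphere_zero_iff_norm.1 hθ,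
    Real.norm_eq_abs, mul_one, sq_abs]
  ring

lemma contDiffAt_ext1 (hx : x ≠ 0) (hg : ContDiffAt ℝ 1 g (‖x‖⁻¹ • x)) :
    ContDiffAt ℝ 1 (ext1 g) x := by
  have hnorm : ContDiffAt ℝ 1 (fun y : E n ↦ ‖y‖) x := contDiffAt_norm ℝ hx
  exact hnorm.mul (ContDiffAt.comp (g := g) x hg
    ((hnorm.inv (norm_ne_zero_iff.2 hx)).smul contDiffAt_id))

lemma inner_gradient_projPerp (g : E n → ℝ) (θ v : E n) :
    ⟪gradient g θ, projPerp θ v⟫ = ⟪sgrad g θ, v⟫ := by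
  simp only [projPerp, sgrad, sub_apply, ContinuousLinearMap.id_apply,
    ContinuousLinearMap.smulRight_apply, innerSL_apply_apply, inner_sub_right, inner_sub_left,
    real_inner_smul_left, real_inner_smul_right]
  ring

lemma hasFDerivAt_inv_norm_smul (hx : x ≠ 0) :
    HasFDerivAt (fun y : E n ↦ ‖y‖⁻¹ • y) (‖x‖⁻¹ • projPerp (‖x‖⁻¹ • x)) x := by
  have hinv := (hasDerivAt_inv (norm_ne_zero_iff.2 hx)).comp_hasFDerivAt x
    (hasGradientAt_norm hx).hasFDerivAt
  refine (hinv.smul (hasFDerivAt_id x)).congr_fderiv ?_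
  ext1 v
  simp [projPerp, smul_smul, sub_eq_add_neg, pow_two, mul_comm, mul_left_comm]

lemma hasGradientAt_ext0 (hx : x ≠ 0) (hg : DifferentiableAt ℝ g (‖x‖⁻¹ • x)) :
    HasGradientAt (ext0 g) (‖x‖⁻¹ • sgrad g (‖x‖⁻¹ • x)) x := by
  have hcomp := HasFDerivAt.comp (f := fun y ↦ ‖y‖⁻¹ • y) x hg.hasGradientAt.hasFDerivAt
    (hasFDerivAt_inv_norm_smul hx)
  refine hasGradientAt_iff_hasFDerivAt.2 (hcomp.congr_fderiv ?_)
  ext1 v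
  rw [map_smul, smul_apply, InnerProductSpace.toDual_apply_apply, ← inner_gradient_projPerp,
    ContinuousLinearMap.comp_apply, smul_apply, InnerProductSpace.toDual_apply_apply,
    real_inner_smul_right, smul_eq_mul]

lemma hasGradientAt_ext1 (hx : x ≠ 0) (hg : DifferentiableAt ℝ g (‖x‖⁻¹ • x)) :
    HasGradientAt (ext1 g) (g (‖x‖⁻¹ • x) • (‖x‖⁻¹ • x) + sgrad g (‖x‖⁻¹ • x)) x := by
  have hmul := (hasGradientAt_norm hx).hasFDerivAt.mul (hasGradientAt_ext0 hx hg).hasFDerivAt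
  rw [← map_smul, ← map_smul, ← map_add, smul_inv_smul₀ (norm_ne_zero_iff.2 hx), add_comm] at hmul
  exact hasGradientAt_iff_hasFDerivAt.2 hmul

lemma norm_fderiv_ext1_sq (hx : x ≠ 0) (hg : DifferentiableAt ℝ g (‖x‖⁻¹ • x)) :
    ‖fderiv ℝ (ext1 g) x‖ ^ 2 = ext0 (fun θ ↦ g θ ^ 2 + ‖sgrad g θ‖ ^ 2) x := by
  rw [(hasGradientAt_ext1 hx hg).hasFDerivAt.fderiv, LinearIsometryEquiv.norm_map,
    norm_smul_add_sgrad_sq _ (inv_norm_smul_mem_sphere hx), ext0]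

lemma continuousOn_ext0 (hg : ContinuousOn g (sphere 0 1)) : ContinuousOn (ext0 g) {0}ᶜ := by
  refine hg.comp (ContinuousOn.smul (continuous_norm.continuousOn.inv₀ fun x hx ↦ ?_)
    continuousOn_id) fun x hx ↦ inv_norm_smul_mem_sphere hx
  exact norm_ne_zero_iff.2 hx

lemma continuousOn_gradient (hg : ∀ θ ∈ sphere (0 : E n) 1, ContDiffAt ℝ 1 g θ) :
    ContinuousOn (gradient g) (sphere 0 1) := continuousOn_of_forall_continuousAt fun θ hθ ↦
  (contDiffAt_gradient (m := 0) (hg θ hθ)).continuousAt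

lemma continuousOn_sgrad (hg : ∀ θ ∈ sphere (0 : E n) 1, ContDiffAt ℝ 1 g θ) :
    ContinuousOn (sgrad g) (sphere 0 1) := by
  have := continuousOn_gradient hg
  unfold sgrad
  fun_prop

variable [NeZero n]

lemma ae_ne_zero_stdGaussian : ∀ᵐ x ∂stdGaussian (E n), x ≠ 0 :=
  stdGaussian_absolutelyContinuous.ae_le (Measure.ae_ne volume 0)

lemma memLp_ext0 (hg : ContinuousOn g (sphere 0 1)) {p : ℝ≥0∞} :
    MemLp (ext0 g) p (stdGaussian (E n)) := by
  obtain ⟨C, hC⟩ := (isCompact_sphere (0 : E n) 1).exists_bound_of_continuousOn hg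
  exact MemLp.of_bound
    (measurable_of_continuousOn_compl_singleton 0 (continuousOn_ext0 hg)).aestronglyMeasurable C
    (ae_ne_zero_stdGaussian.mono fun x hx ↦ hC _ (inv_norm_smul_mem_sphere hx))

lemma memLp_ext1 (hg : ContinuousOn g (sphere 0 1)) :
    MemLp (ext1 g) 2 (stdGaussian (E n)) :=
  (memLp_ext0 hg (p := ∞)).mul IsGaussian.memLp_two_id.norm

lemma ae_norm_fderiv_ext1_sq (hg : ∀ θ ∈ sphere (0 : E n) 1, DifferentiableAt ℝ g θ) :
    (fun x ↦ ‖fderiv ℝ (ext1 g) x‖ ^ 2) =ᵐ[stdGaussian (E n)]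
      ext0 (fun θ ↦ g θ ^ 2 + ‖sgrad g θ‖ ^ 2) := by
  filter_upwards [ae_ne_zero_stdGaussian] with x hx
  exact norm_fderiv_ext1_sq hx (hg _ (inv_norm_smul_mem_sphere hx))

lemma memLp_fderiv_ext1 (hg : ∀ θ ∈ sphere (0 : E n) 1, ContDiffAt ℝ 1 g θ) :
    MemLp (fderiv ℝ (ext1 g)) 2 (stdGaussian (E n)) := by
  have hgc : ContinuousOn g (sphere 0 1) :=
    continuousOn_of_forall_continuousAt fun θ hθ ↦ (hg θ hθ).continuousAt
  have hsgrad := continuousOn_sgrad hg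
  have := FiniteDimensional.proper_real (E n →L[ℝ] ℝ)
  rw [memLp_two_iff_integrable_sq_norm (measurable_fderiv ℝ _).aestronglyMeasurable,
    integrable_congr (ae_norm_fderiv_ext1_sq fun θ hθ ↦ (hg θ hθ).differentiableAt one_ne_zero)]
  exact memLp_one_iff_integrable.1 (memLp_ext0 (by fun_prop))

lemma integral_ext1_sq (g : E n → ℝ) :
    ∫ x, ext1 g x ^ 2 ∂stdGaussian (E n) = n * ∫ θ, g θ ^ 2 ∂sphMeasure n := by
  simp_rw [ext1, mul_pow]
  have polar := integral_norm_mul_ext0 (fun r ↦ r ^ 2) (fun θ ↦ g θ ^ 2)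
  rwa [integral_norm_sq_stdGaussian, finrank_euclideanSpace_fin] at polar

lemma integral_norm_fderiv_ext1_sq (hg : ∀ θ ∈ sphere (0 : E n) 1, ContDiffAt ℝ 1 g θ) :
    ∫ x, ‖fderiv ℝ (ext1 g) x‖ ^ 2 ∂stdGaussian (E n) =
      ∫ θ, g θ ^ 2 ∂sphMeasure n + ∫ θ, ‖sgrad g θ‖ ^ 2 ∂sphMeasure n := by
  have hgc : ContinuousOn g (sphere 0 1) :=
    continuousOn_of_forall_continuousAt fun θ hθ ↦ (hg θ hθ).continuousAt
  have hint : Integrable (fun θ ↦ g θ ^ 2) (sphMeasure n) := integrable_sphMeasure (hgc.pow 2)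
  have hint_sgrad : Integrable (fun θ ↦ ‖sgrad g θ‖ ^ 2) (sphMeasure n) :=
    integrable_sphMeasure ((continuousOn_sgrad hg).norm.pow 2)
  rw [integral_congr_ae
      (ae_norm_fderiv_ext1_sq fun θ hθ ↦ (hg θ hθ).differentiableAt one_ne_zero),
    ← integral_add hint hint_sgrad]
  simpa using integral_norm_mul_ext0 (fun _ ↦ 1) fun θ ↦ g θ ^ 2 + ‖sgrad g θ‖ ^ 2

lemma integral_sq_sphMeasure_le (hn : 2 ≤ n)
    (hg : ∀ θ ∈ sphere (0 : E n) 1, ContDiffAt ℝ 1 g θ) (hmean : ∫ θ, g θ ∂sphMeasure n = 0) :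
    ∫ θ, g θ ^ 2 ∂sphMeasure n ≤
      11 / 5 / (n - 1) * ∫ θ, ‖sgrad g θ‖ ^ 2 ∂sphMeasure n := by
  have hext : MemLp (ext1 g) 2 (stdGaussian (E n)) :=
    memLp_ext1 <| continuousOn_of_forall_continuousAt fun θ hθ ↦ (hg θ hθ).continuousAt
  have hext_mean : ∫ x, ext1 g x ∂stdGaussian (E n) = 0 :=
    (integral_norm_mul_ext0 (fun r ↦ r) g).trans (by rw [hmean, mul_zero])
  have gaussian := variance_stdGaussian_le (by simpa using hn)
    (fun x hx ↦ contDiffAt_ext1 hx (hg _ (inv_norm_smul_mem_sphere hx))) hext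
    (memLp_fderiv_ext1 hg)
  rw [variance_of_integral_eq_zero hext.aemeasurable hext_mean, integral_ext1_sq,
    integral_norm_fderiv_ext1_sq hg] at gaussian
  have hpi : Real.pi ^ 2 / 8 ≤ 5 / 4 := by nlinarith [Real.pi_lt_d2, Real.pi_pos]
  set A := ∫ θ, g θ ^ 2 ∂sphMeasure n
  set B := ∫ θ, ‖sgrad g θ‖ ^ 2 ∂sphMeasure n
  have hA : 0 ≤ A := integral_nonneg fun _ ↦ by positivity
  have hB : 0 ≤ B := integral_nonneg fun _ ↦ by positivity
  have absorb : n * A ≤ 5 / 4 * (A + B) := gaussian.trans (by gcongr)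
  have hn2 : (2 : ℝ) ≤ n := by exact_mod_cast hn
  rw [div_mul_eq_mul_div, le_div_iff₀ (by linarith)]
  nlinarith [mul_nonneg hA (sub_nonneg.2 hn2)]

lemma variance_sphMeasure_le (hn : 2 ≤ n)
    (hg : ∀ θ ∈ sphere (0 : E n) 1, ContDiffAt ℝ 1 g θ) :
    Var[g; sphMeasure n] ≤ 11 / 5 / (n - 1) * ∫ θ, ‖gradient g θ‖ ^ 2 ∂sphMeasure n := by
  have hgc : ContinuousOn g (sphere 0 1) :=
    continuousOn_of_forall_continuousAt fun θ hθ ↦ (hg θ hθ).continuousAt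
  have hn2 : (2 : ℝ) ≤ n := by exact_mod_cast hn
  have hmean : ∫ θ, (g θ - ∫ η, g η ∂sphMeasure n) ∂sphMeasure n = 0 := by
    rw [integral_sub (integrable_sphMeasure hgc) (integrable_const _)]
    simp
  have hsgrad : sgrad (fun θ ↦ g θ - ∫ η, g η ∂sphMeasure n) = sgrad g := by
    ext1 θ
    simp only [sgrad, gradient, fderiv_sub_const]
  have centred := integral_sq_sphMeasure_le hn (fun θ hθ ↦ (hg θ hθ).sub contDiffAt_const) hmean
  rw [hsgrad, ← variance_eq_integral (memLp_sphMeasure hgc (p := 2)).aemeasurable] at centred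
  refine centred.trans (mul_le_mul_of_nonneg_left ?_ (div_nonneg (by norm_num) (by linarith)))
  refine integral_mono_ae (integrable_sphMeasure ((continuousOn_sgrad hg).norm.pow 2))
    (integrable_sphMeasure ((continuousOn_gradient hg).norm.pow 2)) ?_
  filter_upwards [ae_mem_sphere_sphMeasure] with θ hθ
  rw [norm_sgrad_sq hθ]
  linarith [sq_nonneg ⟪gradient g θ, θ⟫]

end SpherePoincare

/-! ### The second order inequality -/

section SecondOrder

lemma hsNormSq_fderiv {G : E n → E n} {x : E n} (hG : DifferentiableAt ℝ G x) :
    hsNormSq (fderiv ℝ G x) = ∑ i, ‖gradient (fun y ↦ G y i) x‖ ^ 2 := by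
  have hentry (i j : Fin n) :
      gradient (fun y ↦ G y i) x j = fderiv ℝ G x (EuclideanSpace.single j 1) i := by
    have hcoord : HasFDerivAt (fun y ↦ G y i) ((EuclideanSpace.proj i).comp (fderiv ℝ G x)) x :=
      (EuclideanSpace.proj (𝕜 := ℝ) i).hasFDerivAt.comp x hG.hasFDerivAt
    have hinner := inner_gradient_left (f := fun y ↦ G y i) (x := x)
      (y := EuclideanSpace.single j (1 : ℝ))
    rw [EuclideanSpace.inner_single_right, one_mul, hcoord.fderiv] at hinner
    simpa using hinner
  simp_rw [hsNormSq, EuclideanSpace.real_norm_sq_eq, hentry]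
  exact Finset.sum_comm

lemma hsNormSq_nonneg (A : E n →L[ℝ] E n) : 0 ≤ hsNormSq A :=
  Finset.sum_nonneg fun _ _ ↦ sq_nonneg _

variable [NeZero n]

lemma integral_norm_sub_integral_sq_sphMeasure_le (hn : 2 ≤ n) {G : E n → E n}
    (hG : ∀ θ ∈ sphere (0 : E n) 1, ContDiffAt ℝ 1 G θ) :
    ∫ θ, ‖G θ - ∫ η, G η ∂sphMeasure n‖ ^ 2 ∂sphMeasure n ≤
      11 / 5 / (n - 1) * ∫ θ, hsNormSq (fderiv ℝ G θ) ∂sphMeasure n := by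
  have hcoord (i : Fin n) : ∀ θ ∈ sphere (0 : E n) 1, ContDiffAt ℝ 1 (fun y ↦ G y i) θ :=
    fun θ hθ ↦ (EuclideanSpace.proj (𝕜 := ℝ) i).contDiff.contDiffAt.comp θ (hG θ hθ)
  have hint (i : Fin n) :
      Integrable (fun θ ↦ ‖gradient (fun y ↦ G y i) θ‖ ^ 2) (sphMeasure n) :=
    integrable_sphMeasure ((continuousOn_gradient (hcoord i)).norm.pow 2)
  have hhs : ∀ᵐ θ ∂sphMeasure n,
      hsNormSq (fderiv ℝ G θ) = ∑ i, ‖gradient (fun y ↦ G y i) θ‖ ^ 2 := by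
    filter_upwards [ae_mem_sphere_sphMeasure] with θ hθ
    exact hsNormSq_fderiv ((hG θ hθ).differentiableAt one_ne_zero)
  have hmem : MemLp G 2 (sphMeasure n) := memLp_sphMeasure <|
    continuousOn_of_forall_continuousAt fun θ hθ ↦ (hG θ hθ).continuousAt
  rw [integral_norm_sub_integral_sq hmem, integral_congr_ae hhs,
    integral_finsetSum _ fun i _ ↦ hint i, Finset.mul_sum]
  exact Finset.sum_le_sum fun i _ ↦ variance_sphMeasure_le hn (hcoord i)

variable {f : E n → ℝ}

lemma variance_le_integral_norm_gradient_sub (hn : 2 ≤ n)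
    (hf : ∀ θ ∈ sphere (0 : E n) 1, ContDiffAt ℝ 1 f θ)
    (hlin : ∀ v : E n, cov[f, fun θ ↦ ⟪v, θ⟫; sphMeasure n] = 0) (a : ℝ) (c : E n) :
    Var[f; sphMeasure n] ≤
      11 / 5 / (n - 1) * ∫ θ, ‖gradient f θ - a • θ - c‖ ^ 2 ∂sphMeasure n := by
  have hf2 : MemLp f 2 (sphMeasure n) := memLp_sphMeasure <|
    continuousOn_of_forall_continuousAt fun θ hθ ↦ (hf θ hθ).continuousAt
  have hc2 : MemLp (fun θ : E n ↦ ⟪c, θ⟫) 2 (sphMeasure n) := memLp_sphMeasure (by fun_prop)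
  calc Var[f; sphMeasure n]
      ≤ Var[fun θ ↦ f θ - ⟪c, θ⟫; sphMeasure n] :=
        variance_le_variance_sub_of_covariance_eq_zero hf2 hc2 (hlin c)
    _ = Var[fun θ ↦ f θ - ⟪c, θ⟫ - a / 2; sphMeasure n] :=
        (variance_sub_const (hf2.sub hc2).aestronglyMeasurable _).symm
    _ = Var[fun θ ↦ f θ - ⟪c, θ⟫ - a / 2 * ‖θ‖ ^ 2; sphMeasure n] := by
        refine variance_congr ?_
        filter_upwards [ae_mem_sphere_sphMeasure] with θ hθ
        simp [mem_sphere_zero_iff_norm.1 hθ]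
    _ ≤ 11 / 5 / (n - 1) * ∫ θ, ‖gradient (fun y ↦ f y - ⟪c, y⟫ - a / 2 * ‖y‖ ^ 2) θ‖ ^ 2
          ∂sphMeasure n :=
        variance_sphMeasure_le hn fun θ hθ ↦ ((hf θ hθ).sub (innerSL ℝ c).contDiff.contDiffAt).sub
          (contDiffAt_const.mul (contDiff_norm_sq ℝ).contDiffAt)
    _ = 11 / 5 / (n - 1) * ∫ θ, ‖gradient f θ - a • θ - c‖ ^ 2 ∂sphMeasure n := by
        congr 1
        refine integral_congr_ae ?_
        filter_upwards [ae_mem_sphere_sphMeasure] with θ hθ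
        rw [(hasGradientAt_sub_quadratic ((hf θ hθ).differentiableAt one_ne_zero) a c).gradient]

lemma variance_le_integral_hsNormSq_hess_sub (hn : 2 ≤ n)
    (hf : ∀ θ ∈ sphere (0 : E n) 1, ContDiffAt ℝ 2 f θ)
    (hlin : ∀ v : E n, cov[f, fun θ ↦ ⟪v, θ⟫; sphMeasure n] = 0) (a : ℝ) :
    Var[f; sphMeasure n] ≤ (11 / 5 / (n - 1)) ^ 2 *
      ∫ θ, hsNormSq (hess f θ - a • ContinuousLinearMap.id ℝ (E n)) ∂sphMeasure n := by
  have hn2 : (2 : ℝ) ≤ n := by exact_mod_cast hn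
  have hfderiv : ∀ θ ∈ sphere (0 : E n) 1, fderiv ℝ (fun x ↦ gradient f x - a • x) θ =
      hess f θ - a • ContinuousLinearMap.id ℝ (E n) := fun θ hθ ↦
    (((contDiffAt_gradient (m := 1) (hf θ hθ)).differentiableAt one_ne_zero).hasFDerivAt.sub
      ((hasFDerivAt_id θ).const_smul a)).fderiv
  have hvector := integral_norm_sub_integral_sq_sphMeasure_le hn fun θ hθ ↦
    (contDiffAt_gradient (m := 1) (hf θ hθ)).sub (contDiffAt_id.const_smul a)
  calc Var[f; sphMeasure n]
      ≤ 11 / 5 / (n - 1) * ∫ θ, ‖gradient f θ - a • θ -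
          ∫ η, (gradient f η - a • η) ∂sphMeasure n‖ ^ 2 ∂sphMeasure n :=
        variance_le_integral_norm_gradient_sub hn
          (fun θ hθ ↦ (hf θ hθ).of_le one_le_two) hlin a _
    _ ≤ 11 / 5 / (n - 1) * (11 / 5 / (n - 1) *
          ∫ θ, hsNormSq (fderiv ℝ (fun x ↦ gradient f x - a • x) θ) ∂sphMeasure n) :=
        mul_le_mul_of_nonneg_left hvector (div_nonneg (by norm_num) (by linarith))
    _ = (11 / 5 / (n - 1)) ^ 2 *
          ∫ θ, hsNormSq (hess f θ - a • ContinuousLinearMap.id ℝ (E n)) ∂sphMeasure n := by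
        rw [← mul_assoc, ← sq]
        congr 1
        refine integral_congr_ae ?_
        filter_upwards [ae_mem_sphere_sphMeasure] with θ hθ
        rw [hfderiv θ hθ]

end SecondOrder

/-- **Corollary 6.2 (Statement 17).** Second order Poincaré-type inequality in the
Euclidean setup. -/
theorem second_order_poincare_euclidean
    {n : ℕ} (hn : 2 ≤ n) (f : E n → ℝ) (U : Set (E n)) (hU : IsOpen U)
    (hUS : Metric.sphere (0 : E n) 1 ⊆ U) (hf : ContDiffOn ℝ 2 f U)
    (hmean : ∫ θ, f θ ∂sphMeasure n = 0)
    (hlin : ∀ v : E n, ∫ θ, ⟪v, θ⟫ * f θ ∂sphMeasure n = 0) :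
    ∀ a : ℝ,
      ∫ θ, (f θ) ^ 2 ∂sphMeasure n ≤
        (5 / ((n : ℝ) - 1) ^ 2) *
          ∫ θ, hsNormSq (hess f θ - a • ContinuousLinearMap.id ℝ (E n)) ∂sphMeasure n := by
  intro a
  have : NeZero n := ⟨by lia⟩
  have hf2 : MemLp f 2 (sphMeasure n) := memLp_sphMeasure (hf.continuousOn.mono hUS)
  have hcov (v : E n) : cov[f, fun θ ↦ ⟪v, θ⟫; sphMeasure n] = 0 := by
    rw [covariance_comm, covariance_eq_sub (memLp_sphMeasure (by fun_prop)) hf2, hmean, mul_zero,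
      sub_zero]
    exact hlin v
  calc ∫ θ, f θ ^ 2 ∂sphMeasure n
      = Var[f; sphMeasure n] := (variance_of_integral_eq_zero hf2.aemeasurable hmean).symm
    _ ≤ (11 / 5 / (n - 1)) ^ 2 *
          ∫ θ, hsNormSq (hess f θ - a • ContinuousLinearMap.id ℝ (E n)) ∂sphMeasure n :=
        variance_le_integral_hsNormSq_hess_sub hn
          (fun θ hθ ↦ hf.contDiffAt (hU.mem_nhds (hUS hθ))) hcov a
    _ ≤ 5 / ((n : ℝ) - 1) ^ 2 *
          ∫ θ, hsNormSq (hess f θ - a • ContinuousLinearMap.id ℝ (E n)) ∂sphMeasure n := by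
        refine mul_le_mul_of_nonneg_right ?_ (integral_nonneg fun _ ↦ hsNormSq_nonneg _)
        rw [div_pow]
        gcongr
        norm_num

end SecondOrderConc
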